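/- Let ζ be the Weierstrass zeta function and ℘ = -ζ' the Weierstrass ℘-function associated to a lattice Λ ⊂ ℂ. For x, y ∈ ℂ with x, y, x+y ∉ Λ, one has the addition formula (ζ(x) + ζ(y) + ζ(-x-y))² = ℘(x) + ℘(y) + ℘(-x-y). -/

import Mathlib

open Complex

/-- The Weierstrass zeta function of the lattice `Λ_τ = ℤ ⊕ ℤτ`:
`ζ(z) = 1/z + ∑_{λ∈Λ∖{0}} (1/(z+λ) - 1/λ + z/λ²)`. -/
noncomputable def wzeta (τ : ℂ) (z : ℂ) : ℂ :=
  1 / z + ∑' p : ℤ × ℤ,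
    if p = 0 then 0
    else 1 / (z + ((p.1 : ℂ) + (p.2 : ℂ) * τ)) - 1 / ((p.1 : ℂ) + (p.2 : ℂ) * τ)
      + z / ((p.1 : ℂ) + (p.2 : ℂ) * τ) ^ 2

/-- The Weierstrass `℘`-function, `℘ = -ζ'`. -/
noncomputable def wp (τ : ℂ) (z : ℂ) : ℂ := -deriv (wzeta τ) z

/-!
Fix `y ∉ Λ` and let `D x = (ζ x + ζ y + ζ (-x - y)) ^ 2 - (℘ x + ℘ y + ℘ (-x - y))`.
Since `ζ' = -℘` and `℘` is `Λ`-periodic, `ζ (x + l) - ζ x` is constant for each `l ∈ Λ`; this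
constant cancels in `D`, so `D` is `Λ`-periodic, and it is visibly invariant under `x ↦ -x - y`.
Near `0` the bracket is `1 / x + g x` with `g` holomorphic, `g 0 = 0` and `g' 0 = ℘ y`, so
`D x = 2 g x / x + g x ^ 2 - (℘ x - 1 / x ^ 2) - ℘ y - ℘ (-x - y)` tends to `2 ℘ y - 2 ℘ y = 0`.
By the two symmetries `D` tends to `0` at all of its singularities, hence extends to an entire
elliptic function with a zero, which vanishes by Liouville's theorem.
-/

section

open Filter Topology
open scoped PeriodPair

section Elliptic

variable {E : Type*} [NormedAddCommGroup E] [NormedSpace ℂ E] {f : ℂ → E} {s : Set ℂ}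

lemma differentiable_of_continuous_of_differentiableAt_off_countable [CompleteSpace E]
    (hf : Continuous f) (hs : s.Countable) (hd : ∀ z ∉ s, DifferentiableAt ℂ f z) :
    Differentiable ℂ f := fun _ ↦
  (Complex.hasFPowerSeriesOnBall_of_differentiable_off_countable hs hf.continuousOn
    (fun z hz ↦ hd z hz.2) one_pos).analyticAt.differentiableAt

lemma apply_eq_apply_of_differentiable_of_periodic (Λ : Submodule ℤ ℂ) [DiscreteTopology Λ]
    [IsZLattice ℝ Λ] (hf : Differentiable ℂ f) (hper : ∀ l ∈ Λ, f.Periodic l) (z w : ℂ) :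
    f z = f w :=
  hf.apply_eq_apply_of_bounded (IsZLattice.isCompact_range_of_periodic Λ f hf.continuous
    fun z l hl ↦ hper l hl z).isBounded z w

end Elliptic

lemma norm_inv_sub_add_inv_add_div_sq_le {z l : ℂ} (h : 2 * ‖z‖ < ‖l‖) :
    ‖1 / (z - l) + 1 / l + z / l ^ 2‖ ≤ 2 * ‖z‖ ^ 2 * ‖l‖ ^ (-3 : ℝ) := by
  have hl : 0 < ‖l‖ := by linarith [norm_nonneg z]
  have hl₀ : l ≠ 0 := norm_pos_iff.mp hl
  have hzl : ‖l‖ / 2 ≤ ‖z - l‖ := by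
    rw [norm_sub_rev]
    linarith [norm_sub_norm_le l z]
  have hzl₀ : z - l ≠ 0 := norm_pos_iff.mp (by linarith)
  calc ‖1 / (z - l) + 1 / l + z / l ^ 2‖
      = ‖z ^ 2 / (l ^ 2 * (z - l))‖ := by
        congr 1
        field_simp
        ring
    _ = ‖z‖ ^ 2 / (‖l‖ ^ 2 * ‖z - l‖) := by simp
    _ ≤ ‖z‖ ^ 2 / (‖l‖ ^ 2 * (‖l‖ / 2)) := by gcongr
    _ = 2 * ‖z‖ ^ 2 / ‖l‖ ^ 3 := by field
    _ = 2 * ‖z‖ ^ 2 * ‖l‖ ^ (-3 : ℝ) := by norm_cast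

lemma hasDerivAt_inv_sub_add_inv_add_div_sq {z l : ℂ} (h : z ≠ l) :
    HasDerivAt (fun w : ℂ ↦ 1 / (w - l) + 1 / l + w / l ^ 2)
      (-(1 / (z - l) ^ 2 - 1 / l ^ 2)) z := by
  have hinv := ((hasDerivAt_id z).sub_const l).fun_inv (sub_ne_zero.mpr h)
  simp only [one_div]
  exact ((hinv.add_const l⁻¹).fun_add ((hasDerivAt_id z).div_const (l ^ 2))).congr_deriv
    (by simp only [id]; ring)

variable (L : PeriodPair)

/-- The Weierstrass zeta function of the lattice `L.lattice`. The lattice points enter with the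
sign used by Mathlib for `℘[L]`, and the summand at `0` is `1 / z` because `1 / 0 = 0`. -/
noncomputable def weierstrassZeta (z : ℂ) : ℂ :=
  ∑' l : L.lattice, (1 / (z - l) + 1 / l + z / l ^ 2)

/-- The Weierstrass zeta function with the summand at `l₀` left out, regular at `l₀`; the
counterpart for `ζ` of `PeriodPair.weierstrassPExcept`. -/
noncomputable def weierstrassZetaExcept (l₀ z : ℂ) : ℂ :=
  ∑' l : L.lattice, if l.1 = l₀ then 0 else 1 / (z - l) + 1 / l + z / l ^ 2

lemma summable_weierstrassZetaExcept (l₀ z : ℂ) :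
    Summable fun l : L.lattice ↦ if l.1 = l₀ then 0 else 1 / (z - l) + 1 / l + z / l ^ 2 := by
  have hlarge : ∀ᶠ l : L.lattice in cofinite, 2 * ‖z‖ < ‖l‖ := by
    rw [← cocompact_eq_cofinite]
    exact (tendsto_norm_cocompact_atTop (E := L.lattice)).eventually_gt_atTop _
  refine .of_norm_bounded_eventually
    ((ZLattice.summable_norm_rpow L.lattice (-3) (by norm_num)).mul_left (2 * ‖z‖ ^ 2)) ?_
  filter_upwards [hlarge] with l hl
  split_ifs
  · rw [norm_zero]
    positivity
  · exact norm_inv_sub_add_inv_add_div_sq_le hl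

lemma weierstrassZetaExcept_add (l₀ : L.lattice) (z : ℂ) :
    weierstrassZetaExcept L l₀ z + (1 / (z - l₀) + 1 / l₀ + z / l₀ ^ 2) = weierstrassZeta L z := by
  have hsplit := (summable_weierstrassZetaExcept L l₀ z).tsum_add
    (hasSum_ite_eq l₀ (1 / (z - l₀) + 1 / l₀ + z / (l₀ : ℂ) ^ 2)).summable
  rw [tsum_ite_eq] at hsplit
  rw [weierstrassZetaExcept, ← hsplit, weierstrassZeta]
  congr with l
  by_cases h : l = l₀ <;> simp [h]

lemma weierstrassZeta_eq_inv_add (z : ℂ) :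
    weierstrassZeta L z = 1 / z + weierstrassZetaExcept L 0 z := by
  simpa [add_comm] using (weierstrassZetaExcept_add L 0 z).symm

lemma weierstrassP_eq_inv_sq_add (z : ℂ) : ℘[L] z = 1 / z ^ 2 + L.weierstrassPExcept 0 z := by
  simpa [add_comm] using (L.weierstrassPExcept_add 0 z).symm

lemma weierstrassZetaExcept_of_notMem {l₀ : ℂ} (h : l₀ ∉ L.lattice) :
    weierstrassZetaExcept L l₀ = weierstrassZeta L := by
  ext z
  exact tsum_congr fun l ↦ if_neg fun e : l.1 = l₀ ↦ h (e ▸ l.2)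

@[simp] lemma weierstrassZetaExcept_zero_right (l₀ : ℂ) : weierstrassZetaExcept L l₀ 0 = 0 := by
  simp [weierstrassZetaExcept]

lemma weierstrassZeta_neg (z : ℂ) : weierstrassZeta L (-z) = -weierstrassZeta L z := by
  rw [weierstrassZeta, weierstrassZeta, ← (Equiv.neg L.lattice).tsum_eq, ← tsum_neg]
  congr with l
  rw [Equiv.neg_apply, NegMemClass.coe_neg, ← neg_sub', div_neg, div_neg, neg_sq]
  ring

lemma hasDerivAt_weierstrassZetaExcept (l₀ : ℂ) {z : ℂ} (hz : z ∈ (L.lattice \ {l₀} : Set ℂ)ᶜ) :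
    HasDerivAt (weierstrassZetaExcept L l₀) (-℘[L - l₀] z) z := by
  have hderiv (l : L.lattice) {w : ℂ} (hw : w ∈ (L.lattice \ {l₀} : Set ℂ)ᶜ) :
      HasDerivAt (fun w : ℂ ↦ if l.1 = l₀ then 0 else 1 / (w - l) + 1 / l + w / l ^ 2)
        (-if l.1 = l₀ then 0 else 1 / (w - l) ^ 2 - 1 / l ^ 2) w := by
    split_ifs with h
    · simpa using hasDerivAt_const w (0 : ℂ)
    · exact hasDerivAt_inv_sub_add_inv_add_div_sq fun e ↦ hw (e ▸ ⟨l.2, h⟩)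
  have hlim := (L.hasSumLocallyUniformly_weierstrassPExcept l₀).tendstoLocallyUniformlyOn
    (s := (L.lattice \ {l₀} : Set ℂ)ᶜ) |>.neg
  refine hasDerivAt_of_tendstoLocallyUniformlyOn L.isOpen_compl_lattice_sdiff hlim
    (.of_forall fun s w hw ↦ ?_) (fun w _ ↦ (summable_weierstrassZetaExcept L l₀ w).hasSum) hz
  simpa using HasDerivAt.fun_sum fun l (_ : l ∈ s) ↦ hderiv l hw

variable {L} {x y z : ℂ}

lemma hasDerivAt_weierstrassZeta (hz : z ∉ L.lattice) :
    HasDerivAt (weierstrassZeta L) (-℘[L] z) z := by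
  have h := L.ω₁_div_two_notMem_lattice
  rw [← weierstrassZetaExcept_of_notMem L h, ← L.weierstrassPExcept_of_notMem _ h]
  exact hasDerivAt_weierstrassZetaExcept L _ fun hz' ↦ hz hz'.1

lemma differentiableAt_weierstrassP (hz : z ∉ L.lattice) : DifferentiableAt ℂ ℘[L] z :=
  (L.analyticOnNhd_weierstrassP z hz).differentiableAt

variable (L) in
lemma countable_lattice : (L.lattice : Set ℂ).Countable :=
  Set.countable_coe_iff.mp L.latticeEquivProd.injective.countable

lemma exists_weierstrassZeta_add_coe (l : L.lattice) :
    ∃ c, ∀ z ∉ L.lattice, weierstrassZeta L (z + l) = weierstrassZeta L z + c := by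
  have hderiv (z : ℂ) (hz : z ∈ (L.lattice : Set ℂ)ᶜ) :
      HasDerivAt (fun z ↦ weierstrassZeta L (z + l) - weierstrassZeta L z) 0 z := by
    have hzl : z + l ∉ L.lattice := (Submodule.add_mem_iff_left _ l.2).not.mpr hz
    refine ((hasDerivAt_weierstrassZeta hzl).comp_add_const z l.1 |>.fun_sub
      (hasDerivAt_weierstrassZeta hz)).congr_deriv ?_
    rw [L.weierstrassP_add_coe, sub_self]
  have hconn : IsPreconnected (L.lattice : Set ℂ)ᶜ :=
    ((countable_lattice L).isConnected_compl_of_one_lt_rank (by simp)).isPreconnected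
  obtain ⟨c, hc⟩ := L.isClosed_lattice.isOpen_compl.exists_is_const_of_deriv_eq_zero hconn
    (fun z hz ↦ (hderiv z hz).differentiableAt.differentiableWithinAt)
    (fun z hz ↦ (hderiv z hz).deriv)
  exact ⟨c, fun z hz ↦ sub_eq_iff_eq_add'.mp (hc z hz)⟩

section AdditionDefect

variable (L y) in
/-- The difference of the two sides of the addition formula as a function of `x`, set to `0` (its
limit, when `y ∉ L.lattice`) at the points `x` where `x` or `-x - y` is a pole of `ζ` and `℘`. -/
noncomputable def additionDefect : ℂ → ℂ :=
  Set.indicator {x | x ∉ L.lattice ∧ -x - y ∉ L.lattice} fun x ↦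
    (weierstrassZeta L x + weierstrassZeta L y + weierstrassZeta L (-x - y)) ^ 2
      - (℘[L] x + ℘[L] y + ℘[L] (-x - y))

lemma additionDefect_of_notMem (hx : x ∉ L.lattice) (hxy : -x - y ∉ L.lattice) :
    additionDefect L y x =
      (weierstrassZeta L x + weierstrassZeta L y + weierstrassZeta L (-x - y)) ^ 2
        - (℘[L] x + ℘[L] y + ℘[L] (-x - y)) :=
  Set.indicator_of_mem (s := {x | x ∉ L.lattice ∧ -x - y ∉ L.lattice}) ⟨hx, hxy⟩ _

lemma additionDefect_of_mem (hx : x ∈ L.lattice) : additionDefect L y x = 0 :=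
  Set.indicator_of_notMem (fun h ↦ h.1 hx) _

lemma additionDefect_of_neg_sub_mem (hxy : -x - y ∈ L.lattice) : additionDefect L y x = 0 :=
  Set.indicator_of_notMem (fun h ↦ h.2 hxy) _

variable (L y) in
lemma additionDefect_neg_sub (x : ℂ) : additionDefect L y (-x - y) = additionDefect L y x := by
  have hinv : -(-x - y) - y = x := by ring
  by_cases hx : x ∈ L.lattice
  · rw [additionDefect_of_mem hx, additionDefect_of_neg_sub_mem (by rwa [hinv])]
  by_cases hxy : -x - y ∈ L.lattice
  · rw [additionDefect_of_neg_sub_mem hxy, additionDefect_of_mem hxy]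
  rw [additionDefect_of_notMem hx hxy, additionDefect_of_notMem hxy (by rwa [hinv]), hinv]
  ring

variable (y) in
lemma periodic_additionDefect (l : L.lattice) : (additionDefect L y).Periodic l := by
  intro x
  have hrefl : -(x + l) - y = -x - y - l := by ring
  have hmem : x + l ∈ L.lattice ↔ x ∈ L.lattice := Submodule.add_mem_iff_left _ l.2
  have hmem' : -(x + l) - y ∈ L.lattice ↔ -x - y ∈ L.lattice := by
    rw [hrefl, Submodule.sub_mem_iff_left _ l.2]
  by_cases hx : x ∈ L.lattice
  · rw [additionDefect_of_mem hx, additionDefect_of_mem (hmem.mpr hx)]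
  by_cases hxy : -x - y ∈ L.lattice
  · rw [additionDefect_of_neg_sub_mem hxy, additionDefect_of_neg_sub_mem (hmem'.mpr hxy)]
  obtain ⟨c, hc⟩ := exists_weierstrassZeta_add_coe l
  have hζ := hc _ (hmem'.not.mpr hxy)
  rw [hrefl, sub_add_cancel] at hζ
  rw [additionDefect_of_notMem hx hxy,
    additionDefect_of_notMem (hmem.not.mpr hx) (hmem'.not.mpr hxy), hrefl, hc x hx, hζ,
    L.weierstrassP_add_coe, L.weierstrassP_sub_coe]
  ring

variable (L y) in
/-- The holomorphic part at `0` of `x ↦ ζ(x) + ζ(y) + ζ(-x - y)`. -/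
noncomputable def zetaSumRegularPart (x : ℂ) : ℂ :=
  weierstrassZetaExcept L 0 x + weierstrassZeta L y + weierstrassZeta L (-x - y)

@[simp] lemma zetaSumRegularPart_zero : zetaSumRegularPart L y 0 = 0 := by
  simp [zetaSumRegularPart, weierstrassZeta_neg]

lemma hasDerivAt_comp_neg_sub {f : ℂ → ℂ} {f' : ℂ} (h : HasDerivAt f f' (-x - y)) :
    HasDerivAt (fun x ↦ f (-x - y)) (-f') x := by
  simpa using! h.comp x ((hasDerivAt_neg x).sub_const y)

lemma hasDerivAt_zetaSumRegularPart_zero (hy : y ∉ L.lattice) :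
    HasDerivAt (zetaSumRegularPart L y) (℘[L] y) 0 := by
  have hy' : -0 - y ∉ L.lattice := by simpa using hy
  have hζ := hasDerivAt_comp_neg_sub (hasDerivAt_weierstrassZeta hy')
  refine (((hasDerivAt_weierstrassZetaExcept L 0 (by simp)).add_const _).fun_add hζ).congr_deriv ?_
  simp [L.weierstrassP_neg]

-- At `x = 0` the right-hand side is `2 ℘(y) - 2 ℘(y)`, so the identity includes the centre.
lemma additionDefect_eventuallyEq (hy : y ∉ L.lattice) :
    additionDefect L y =ᶠ[𝓝 0] fun x ↦
      2 * dslope (zetaSumRegularPart L y) 0 x + zetaSumRegularPart L y x ^ 2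
        - (L.weierstrassPExcept 0 x + ℘[L] y + ℘[L] (-x - y)) := by
  have hnhds : ∀ᶠ x in 𝓝 (0 : ℂ), -x - y ∉ L.lattice :=
    (by fun_prop : Continuous fun x : ℂ ↦ -x - y).continuousAt.eventually
      (L.isClosed_lattice.isOpen_compl.mem_nhds (by simpa using hy))
  filter_upwards [hnhds, L.compl_lattice_sdiff_singleton_mem_nhds 0] with x hxy hx
  rcases eq_or_ne x 0 with rfl | hx₀
  · rw [additionDefect_of_mem (zero_mem _), dslope_same,
      (hasDerivAt_zetaSumRegularPart_zero hy).deriv]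
    simp only [zetaSumRegularPart_zero, L.weierstrassPExcept_zero, neg_zero, zero_sub,
      L.weierstrassP_neg]
    ring
  · rw [additionDefect_of_notMem (fun h ↦ hx ⟨h, hx₀⟩) hxy, dslope_of_ne _ hx₀, slope_def_field,
      zetaSumRegularPart_zero, weierstrassP_eq_inv_sq_add, weierstrassZeta_eq_inv_add,
      zetaSumRegularPart]
    field_simp
    ring

lemma continuousAt_additionDefect_zero (hy : y ∉ L.lattice) :
    ContinuousAt (additionDefect L y) 0 := by
  have hg := (hasDerivAt_zetaSumRegularPart_zero hy).differentiableAt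
  have hP : ContinuousAt (fun x ↦ ℘[L] (-x - y)) 0 :=
    (hasDerivAt_comp_neg_sub
      (differentiableAt_weierstrassP (by simpa using hy)).hasDerivAt).continuousAt
  refine ContinuousAt.congr ?_ (additionDefect_eventuallyEq hy).symm
  exact (((continuousAt_dslope_same.mpr hg).const_mul 2).add (hg.continuousAt.pow 2)).sub
    (((L.analyticAt_weierstrassPExcept 0).continuousAt.add continuousAt_const).add hP)

lemma differentiableAt_additionDefect (hx : x ∉ L.lattice) (hxy : -x - y ∉ L.lattice) :
    DifferentiableAt ℂ (additionDefect L y) x := by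
  have hopen : IsOpen (L.lattice : Set ℂ)ᶜ := L.isClosed_lattice.isOpen_compl
  have hnhds : ∀ᶠ w in 𝓝 x, -w - y ∉ L.lattice :=
    (by fun_prop : Continuous fun w : ℂ ↦ -w - y).continuousAt.eventually (hopen.mem_nhds hxy)
  have hζ := (hasDerivAt_weierstrassZeta hx).differentiableAt
  have hζ' := (hasDerivAt_comp_neg_sub (hasDerivAt_weierstrassZeta hxy)).differentiableAt
  have hP := differentiableAt_weierstrassP hx
  have hP' :=
    (hasDerivAt_comp_neg_sub (differentiableAt_weierstrassP hxy).hasDerivAt).differentiableAt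
  refine DifferentiableAt.congr_of_eventuallyEq ?_ (hnhds.mp (eventually_of_mem
    (hopen.mem_nhds hx) fun w hw hwy ↦ additionDefect_of_notMem hw hwy))
  fun_prop

lemma continuous_additionDefect (hy : y ∉ L.lattice) : Continuous (additionDefect L y) := by
  have hlattice (l : ℂ) (hl : l ∈ L.lattice) : ContinuousAt (additionDefect L y) l := by
    have hshift : additionDefect L y = additionDefect L y ∘ (· - l) :=
      funext fun x ↦ ((periodic_additionDefect y ⟨l, hl⟩).sub_eq x).symm
    rw [hshift]
    exact ContinuousAt.comp (by simpa using continuousAt_additionDefect_zero hy) (by fun_prop)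
  rw [continuous_iff_continuousAt]
  intro x
  by_cases hx : x ∈ L.lattice
  · exact hlattice x hx
  by_cases hxy : -x - y ∈ L.lattice
  · have hreflect : additionDefect L y = additionDefect L y ∘ fun x ↦ -x - y :=
      funext fun x ↦ (additionDefect_neg_sub L y x).symm
    rw [hreflect]
    exact ContinuousAt.comp (f := fun x ↦ -x - y) (hlattice _ hxy) (by fun_prop)
  · exact (differentiableAt_additionDefect hx hxy).continuousAt

lemma differentiable_additionDefect (hy : y ∉ L.lattice) :
    Differentiable ℂ (additionDefect L y) := by
  have hinj : Function.Injective fun x : ℂ ↦ -x - y := sub_left_injective.comp neg_injective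
  refine differentiable_of_continuous_of_differentiableAt_off_countable
    (continuous_additionDefect hy)
    ((countable_lattice L).union ((countable_lattice L).preimage hinj)) fun x hx ↦ ?_
  rw [Set.mem_union, not_or] at hx
  exact differentiableAt_additionDefect hx.1 hx.2

lemma additionDefect_eq_zero (hy : y ∉ L.lattice) (x : ℂ) : additionDefect L y x = 0 :=
  calc additionDefect L y x = additionDefect L y 0 :=
        apply_eq_apply_of_differentiable_of_periodic L.lattice (differentiable_additionDefect hy)
          (fun l hl ↦ periodic_additionDefect y ⟨l, hl⟩) x 0
    _ = 0 := additionDefect_of_mem (zero_mem _)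

end AdditionDefect

theorem wzeta_addition_formula_general (hx : x ∉ L.lattice) (hy : y ∉ L.lattice)
    (hxy : x + y ∉ L.lattice) :
    (weierstrassZeta L x + weierstrassZeta L y + weierstrassZeta L (-x - y)) ^ 2
      = ℘[L] x + ℘[L] y + ℘[L] (-x - y) := by
  have hxy' : -x - y ∉ L.lattice := by rwa [← neg_add', neg_mem_iff]
  rw [← sub_eq_zero, ← additionDefect_of_notMem hx hxy']
  exact additionDefect_eq_zero hy x

section NormalizedPeriodPair

variable {τ : ℂ} (hτ : τ.im ≠ 0)

/-- The period pair `(1, τ)`, whose lattice is `ℤ ⊕ ℤτ`. -/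
noncomputable def normalizedPeriodPair : PeriodPair where
  ω₁ := 1
  ω₂ := τ
  indep := (LinearIndependent.pair_iff' one_ne_zero).mpr fun a h ↦ hτ (by simp [← h])

lemma mem_lattice_normalizedPeriodPair :
    z ∈ (normalizedPeriodPair hτ).lattice ↔ ∃ m n : ℤ, z = m + n * τ := by
  simp [PeriodPair.mem_lattice, normalizedPeriodPair, eq_comm]

lemma wzeta_eq_weierstrassZeta : wzeta τ = weierstrassZeta (normalizedPeriodPair hτ) := by
  ext z
  let e := (Equiv.neg (ℤ × ℤ)).trans (normalizedPeriodPair hτ).latticeEquivProd.symm.toEquiv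
  have he (p : ℤ × ℤ) : (e p : ℂ) = -(p.1 + p.2 * τ) := by
    refine ((normalizedPeriodPair hτ).latticeEquiv_symm_apply (-p)).trans ?_
    simp only [normalizedPeriodPair, Prod.fst_neg, Prod.snd_neg, Int.cast_neg]
    ring
  have he₀ (p : ℤ × ℤ) : (e p : ℂ) = 0 ↔ p = 0 := by simp [e]
  rw [weierstrassZeta_eq_inv_add, wzeta, weierstrassZetaExcept, ← e.tsum_eq]
  simp only [he₀]
  simp only [he, sub_neg_eq_add, div_neg, neg_sq, ← sub_eq_add_neg]

lemma wp_eq_weierstrassP (hz : z ∉ (normalizedPeriodPair hτ).lattice) :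
    wp τ z = ℘[normalizedPeriodPair hτ] z := by
  rw [wp, wzeta_eq_weierstrassZeta hτ, (hasDerivAt_weierstrassZeta hz).deriv, neg_neg]

end NormalizedPeriodPair

end

/-- Addition formula: for `x, y, x+y ∉ Λ_τ`,
`(ζ(x) + ζ(y) + ζ(-x-y))² = ℘(x) + ℘(y) + ℘(-x-y)`. -/
theorem wzeta_addition_formula (τ : ℂ) (hτ : 0 < τ.im) (x y : ℂ)
    (hx : ¬∃ m n : ℤ, x = (m : ℂ) + (n : ℂ) * τ)
    (hy : ¬∃ m n : ℤ, y = (m : ℂ) + (n : ℂ) * τ)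
    (hxy : ¬∃ m n : ℤ, x + y = (m : ℂ) + (n : ℂ) * τ) :
    (wzeta τ x + wzeta τ y + wzeta τ (-x - y)) ^ 2
      = wp τ x + wp τ y + wp τ (-x - y) := by
  rw [← mem_lattice_normalizedPeriodPair hτ.ne'] at hx hy hxy
  have hxy' : -x - y ∉ (normalizedPeriodPair hτ.ne').lattice := by rwa [← neg_add', neg_mem_iff]
  rw [wzeta_eq_weierstrassZeta hτ.ne', wp_eq_weierstrassP hτ.ne' hx, wp_eq_weierstrassP hτ.ne' hy,
    wp_eq_weierstrassP hτ.ne' hxy']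
  exact wzeta_addition_formula_general hx hy hxy
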